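/- Let m ≥ r ≥ 2 be integers and let F be a nondegenerate r-graph on m vertices. Suppose there exists a constant c > 0 such that for all sufficiently large n: (a) F is (c·C(n,r−1), ((1−π(F))/(4m))·C(n,r−1))-bounded, and (b) ex(n,F) is ((1−π(F))/(8m))·C(n,r−1)-smooth. Then there exists N_0 such that for all integers n ≥ N_0 and all integers t with 0 ≤ t ≤ min{ c·n/(4·e·r·m), (1−π(F))·n/(64·r·m²) }, the following holds: if H_1, …, H_{t+1} are n-vertex r-graphs on the same vertex set satisfying |H_i| > C(n,r) − C(n−t,r) + ex(n−t,F) for all i ∈ [t+1], then {H_1, …, H_{t+1}} contains a rainbow F-matching. -/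

import Mathlib

open Filter

namespace DensityCH

/-- An `r`-uniform hypergraph with vertices in `ℕ`:
a finite vertex set together with a set of `r`-element edges. -/
structure HGraph (r : ℕ) where
  verts : Finset ℕ
  edges : Finset (Finset ℕ)
  edges_sub : ∀ e ∈ edges, e ⊆ verts
  edges_card : ∀ e ∈ edges, e.card = r

namespace HGraph

/-- Build an `r`-graph from a vertex set and a set of candidate edges,
keeping exactly the well-formed candidates. -/
def ofEdges (r : ℕ) (V : Finset ℕ) (E : Finset (Finset ℕ)) : HGraph r where
  verts := V
  edges := E.filter fun e => e ⊆ V ∧ e.card = r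
  edges_sub := fun e he => ((Finset.mem_filter.mp he).2).1
  edges_card := fun e he => ((Finset.mem_filter.mp he).2).2

variable {r : ℕ}

/-- `H` contains a copy of `F`, i.e. a subgraph isomorphic to `F`. -/
def IsCopyIn (F H : HGraph r) : Prop :=
  ∃ f : ℕ → ℕ, Set.InjOn f ↑F.verts ∧ (∀ v ∈ F.verts, f v ∈ H.verts) ∧
    ∀ e ∈ F.edges, e.image f ∈ H.edges

/-- The subgraph of `H` induced on `S`. -/
def induce (H : HGraph r) (S : Finset ℕ) : HGraph r :=
  ofEdges r (H.verts ∩ S) (H.edges.filter fun e => e ⊆ S)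

/-- Delete a vertex from `H`. -/
def deleteVert (H : HGraph r) (v : ℕ) : HGraph r :=
  ofEdges r (H.verts.erase v) (H.edges.filter fun e => v ∉ e)

/-- The degree of a vertex. -/
def deg (H : HGraph r) (v : ℕ) : ℕ := (H.edges.filter fun e => v ∈ e).card

/-- The maximum degree `Δ(H)`. -/
def maxDeg (H : HGraph r) : ℕ := H.verts.sup H.deg

/-- The minimum degree `δ(H)`. -/
def minDeg (H : HGraph r) : ℕ :=
  if h : H.verts.Nonempty then H.verts.inf' h H.deg else 0

/-- The average degree `d(H) = r·|E(H)|/|V(H)|`. -/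
noncomputable def avgDeg (H : HGraph r) : ℝ :=
  (r : ℝ) * (H.edges.card : ℝ) / (H.verts.card : ℝ)

/-- `H` contains `k` pairwise vertex-disjoint copies of `F`, i.e. `ν(F,H) ≥ k`. -/
def HasMatching (F H : HGraph r) (k : ℕ) : Prop :=
  ∃ S : Fin k → Finset ℕ,
    (∀ i, S i ⊆ H.verts ∧ (S i).card = F.verts.card) ∧
    (∀ i j, i ≠ j → Disjoint (S i) (S j)) ∧
    ∀ i, F.IsCopyIn (H.induce (S i))

/-- Isomorphism of hypergraphs. -/
def Iso (G H : HGraph r) : Prop :=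
  ∃ f : ℕ → ℕ, Set.BijOn f ↑G.verts ↑H.verts ∧
    ∀ e ∈ Finset.powersetCard r G.verts, (e ∈ G.edges ↔ e.image f ∈ H.edges)

/-- The join `G ⋈ H`: all edges of `G`, all edges of `H`, and all `r`-sets meeting
both vertex sets. -/
def join (G H : HGraph r) : HGraph r :=
  ofEdges r (G.verts ∪ H.verts)
    (G.edges ∪ H.edges ∪ ((Finset.powersetCard r (G.verts ∪ H.verts)).filter
      fun e => (e ∩ G.verts).Nonempty ∧ (e ∩ H.verts).Nonempty))

end HGraph

/-- The complete `r`-graph on a vertex set `S`. -/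
def completeOn (r : ℕ) (S : Finset ℕ) : HGraph r :=
  HGraph.ofEdges r S (Finset.powersetCard r S)

/-- The `r`-graph on `V` with no edges. -/
def emptyOn (r : ℕ) (V : Finset ℕ) : HGraph r := HGraph.ofEdges r V ∅

/-- The Turán number `ex(n,F)`. -/
noncomputable def exN (r n : ℕ) (F : HGraph r) : ℕ :=
  sSup {m | ∃ H : HGraph r, H.verts.card = n ∧ ¬ F.IsCopyIn H ∧ H.edges.card = m}

/-- `d(n,F) = r·ex(n,F)/n`. -/
noncomputable def dN (r n : ℕ) (F : HGraph r) : ℝ := (r : ℝ) * (exN r n F : ℝ) / (n : ℝ)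

/-- `δ(n,F) = ex(n,F) − ex(n−1,F)` (as a real number). -/
noncomputable def deltaN (r n : ℕ) (F : HGraph r) : ℝ := (exN r n F : ℝ) - (exN r (n-1) F : ℝ)

/-- `x` is the Turán density `π(F)`, i.e. the limit of `ex(n,F)/C(n,r)`. -/
def HasTuranDensity (r : ℕ) (F : HGraph r) (x : ℝ) : Prop :=
  Tendsto (fun n : ℕ => (exN r n F : ℝ) / (n.choose r : ℝ)) atTop (nhds x)

/-- `ex(n,(t+1)F)`: the maximum number of edges of an `n`-vertex `r`-graph with no
`t+1` pairwise vertex-disjoint copies of `F`. -/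
noncomputable def exMatchN (r n t : ℕ) (F : HGraph r) : ℕ :=
  sSup {m | ∃ H : HGraph r, H.verts.card = n ∧ ¬ F.HasMatching H (t+1) ∧ H.edges.card = m}

/-- `H ∈ EX(n,F)`. -/
def IsExtremalFree (r n : ℕ) (F H : HGraph r) : Prop :=
  H.verts.card = n ∧ ¬ F.IsCopyIn H ∧ H.edges.card = exN r n F

/-- `H ∈ EX(n,(t+1)F)`. -/
def IsExtremalMatchingFree (r n t : ℕ) (F H : HGraph r) : Prop :=
  H.verts.card = n ∧ ¬ F.HasMatching H (t+1) ∧ H.edges.card = exMatchN r n t F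

/-- `F` is `(f1, f2)`-bounded at `n`. -/
def BoundedAt (r n : ℕ) (F : HGraph r) (f1 f2 : ℝ) : Prop :=
  ∀ H : HGraph r, H.verts.card = n → ¬ F.IsCopyIn H →
    dN r n F - f1 ≤ H.avgDeg → (H.maxDeg : ℝ) ≤ dN r n F + f2

/-- `ex(·,F)` is `g`-smooth at `n`: `|δ(n,F) − d(n−1,F)| ≤ g(n)`. -/
def SmoothAt (r n : ℕ) (F : HGraph r) (g : ℝ) : Prop :=
  |deltaN r n F - dN r (n-1) F| ≤ g

/-- The collection `H 0, …, H t` (on a common vertex set) has a rainbow `F`-matching. -/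
def HasRainbowMatching (r t : ℕ) (F : HGraph r) (H : Fin (t+1) → HGraph r) : Prop :=
  ∃ S : Fin (t+1) → Finset ℕ,
    (∀ i, S i ⊆ (H i).verts ∧ (S i).card = F.verts.card) ∧
    (∀ i j, i ≠ j → Disjoint (S i) (S j)) ∧
    ∀ i, F.IsCopyIn ((H i).induce (S i))

/-!  Patterns -/

/-- An `r`-uniform pattern: a finite index set together with a collection of
`r`-multisets on it. -/
structure Pattern (r : ℕ) where
  idx : Finset ℕ
  mE : Finset (Multiset ℕ)
  card_eq : ∀ s ∈ mE, Multiset.card s = r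
  mem_idx : ∀ s ∈ mE, ∀ i ∈ s, i ∈ idx

namespace Pattern

variable {r : ℕ}

/-- The pattern `P − i`. -/
def erase (P : Pattern r) (i : ℕ) : Pattern r where
  idx := P.idx.erase i
  mE := P.mE.filter fun s => i ∉ s
  card_eq := fun s hs => P.card_eq s (Finset.mem_filter.mp hs).1
  mem_idx := by
    intro s hs j hj
    have h1 := Finset.mem_filter.mp hs
    refine Finset.mem_erase.mpr ⟨?_, P.mem_idx s h1.1 j hj⟩
    rintro rfl
    exact h1.2 hj

/-- `H` is a `P`-construction: a blowup of the pattern `P`. -/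
def IsConstruction (P : Pattern r) (H : HGraph r) : Prop :=
  ∃ part : ℕ → ℕ, (∀ v ∈ H.verts, part v ∈ P.idx) ∧
    ∀ e : Finset ℕ, e ∈ H.edges ↔ (e ⊆ H.verts ∧ e.card = r ∧ Multiset.map part e.val ∈ P.mE)

/-- `H` is a `P`-subconstruction: a subgraph of a `P`-construction. -/
def IsSubconstruction (P : Pattern r) (H : HGraph r) : Prop :=
  ∃ G : HGraph r, P.IsConstruction G ∧ H.verts ⊆ G.verts ∧ H.edges ⊆ G.edges

end Pattern

/-- `Λ(P,n)`: the maximum number of edges of an `n`-vertex `P`-construction. -/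
noncomputable def patEx (r : ℕ) (P : Pattern r) (n : ℕ) : ℕ :=
  sSup {m | ∃ H : HGraph r, P.IsConstruction H ∧ H.verts.card = n ∧ H.edges.card = m}

/-- The Lagrangian `λ(P) = lim Λ(P,n)/C(n,r)`. -/
noncomputable def patLagrangian (r : ℕ) (P : Pattern r) : ℝ :=
  limUnder atTop fun n : ℕ => (patEx r P n : ℝ) / (n.choose r : ℝ)

/-- The pattern `P` is minimal: `λ(P−i) < λ(P)` for all `i`. -/
def Pattern.Minimal {r : ℕ} (P : Pattern r) : Prop :=
  ∀ i ∈ P.idx, patLagrangian r (P.erase i) < patLagrangian r P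

/-- `(F,P)` is a Turán pair. -/
def IsTuranPair (r : ℕ) (F : HGraph r) (P : Pattern r) : Prop :=
  (∀ H : HGraph r, P.IsConstruction H → ¬ F.IsCopyIn H) ∧
  (∀ H : HGraph r, ¬ F.IsCopyIn H → H.edges.card = exN r H.verts.card F →
    P.IsConstruction H)

/-- `F` is edge-stable with respect to `P` (with Turán density `π`). -/
def EdgeStable (r : ℕ) (F : HGraph r) (P : Pattern r) (π : ℝ) : Prop :=
  ∀ δ : ℝ, 0 < δ → ∃ N₀ : ℕ, ∃ ζ : ℝ, 0 < ζ ∧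
    ∀ H : HGraph r, N₀ ≤ H.verts.card → ¬ F.IsCopyIn H →
      (π - ζ) * (H.verts.card.choose r : ℝ) ≤ (H.edges.card : ℝ) →
      ∃ H' : HGraph r, H'.verts ⊆ H.verts ∧ H'.edges ⊆ H.edges ∧
        (π - δ) * (H.verts.card.choose r : ℝ) ≤ (H'.edges.card : ℝ) ∧
        P.IsSubconstruction H'

/-- `F` is weakly vertex-extendable with respect to `P` (with Turán density `π`). -/
def WeaklyVertexExtendable (r : ℕ) (F : HGraph r) (P : Pattern r) (π : ℝ) : Prop :=
  ∀ δ : ℝ, 0 < δ → ∃ N₀ : ℕ, ∃ ζ : ℝ, 0 < ζ ∧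
    ∀ H : HGraph r, N₀ ≤ H.verts.card → ¬ F.IsCopyIn H →
      (π - ζ) * (((H.verts.card - 1).choose (r-1) : ℕ) : ℝ) ≤ (H.minDeg : ℝ) →
      ∀ v ∈ H.verts, P.IsSubconstruction (H.deleteVert v) →
        (H.deg v : ℝ) ≤ (π + δ) * (((H.verts.card - 1).choose (r-1) : ℕ) : ℝ)

/-- `F` is degree-stable with respect to `P` (with Turán density `π`). -/
def DegreeStable (r : ℕ) (F : HGraph r) (P : Pattern r) (π : ℝ) : Prop :=
  ∃ ζ : ℝ, 0 < ζ ∧ ∃ N₀ : ℕ,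
    ∀ H : HGraph r, N₀ ≤ H.verts.card → ¬ F.IsCopyIn H →
      (π - ζ) * (((H.verts.card - 1).choose (r-1) : ℕ) : ℝ) ≤ (H.minDeg : ℝ) →
      P.IsSubconstruction H

/-!  Concrete constructions -/

/-- The generalized Turán graph `T_r(·,ℓ)` on vertex set `V` (parts are residue
classes mod `ℓ`; on an interval these are balanced). -/
def turanOn (r ℓ : ℕ) (V : Finset ℕ) : HGraph r :=
  HGraph.ofEdges r V ((Finset.powersetCard r V).filter
    fun e => ∀ u ∈ e, ∀ v ∈ e, u % ℓ = v % ℓ → u = v)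

/-- The `r`-graph on `V₁ ∪ V₂` whose edges are all `r`-sets meeting both parts. -/
def crossOn (r : ℕ) (V₁ V₂ : Finset ℕ) : HGraph r :=
  HGraph.ofEdges r (V₁ ∪ V₂) ((Finset.powersetCard r (V₁ ∪ V₂)).filter
    fun e => (e ∩ V₁).Nonempty ∧ (e ∩ V₂).Nonempty)

/-- The `r`-graph on `V₁ ∪ V₂` whose edges are all `r`-sets meeting `V₁` in an odd
number of vertices. -/
def oddCross (r : ℕ) (V₁ V₂ : Finset ℕ) : HGraph r :=
  HGraph.ofEdges r (V₁ ∪ V₂) ((Finset.powersetCard r (V₁ ∪ V₂)).filter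
    fun e => Odd (e ∩ V₁).card)

/-- The Fano plane. -/
def fano : HGraph 3 :=
  HGraph.ofEdges 3 (Finset.Icc 1 7)
    {({1,2,3} : Finset ℕ), {3,4,5}, {5,6,1}, {1,7,4}, {2,7,5}, {3,7,6}, {2,4,6}}

/-- The generalized triangle `𝕋_r`, with edges `{1,…,r}`, `{1,…,r−1,r+1}` and
`{r,…,2r−1}`. -/
def genTri (r : ℕ) : HGraph r :=
  HGraph.ofEdges r (Finset.Icc 1 (2*r - 1))
    {Finset.Icc 1 r, Finset.Icc 1 (r-1) ∪ {r+1}, Finset.Icc r (2*r - 1)}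

/-- `G` is a blowup of the `r`-graph `W` (viewing `W` as a pattern). -/
def IsBlowupOf {r : ℕ} (W G : HGraph r) : Prop :=
  ∃ part : ℕ → ℕ, (∀ v ∈ G.verts, part v ∈ W.verts) ∧
    ∀ e : Finset ℕ, e ∈ G.edges ↔
      (e ⊆ G.verts ∧ e.card = r ∧ ∃ f ∈ W.edges, Multiset.map part e.val = f.val)

/-- The expansion `H^F` of an `r`-graph `F`: for every pair of vertices not covered
by an edge of `F`, add an edge consisting of this pair plus `r−2` new vertices,
these sets of new vertices being pairwise disjoint. -/
def HGraph.expansion {r : ℕ} (F : HGraph r) : HGraph r :=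
  HGraph.ofEdges r
    (F.verts ∪ (((F.verts ×ˢ F.verts).filter fun p =>
        p.1 < p.2 ∧ ∀ e ∈ F.edges, ¬ (p.1 ∈ e ∧ p.2 ∈ e)).biUnion fun p =>
      (Finset.range (r-2)).image fun s =>
        (F.verts.sup id + 1) + (p.1 * (F.verts.sup id + 1) + p.2) * r + s))
    (F.edges ∪ (((F.verts ×ˢ F.verts).filter fun p =>
        p.1 < p.2 ∧ ∀ e ∈ F.edges, ¬ (p.1 ∈ e ∧ p.2 ∈ e)).image fun p =>
      insert p.1 (insert p.2 ((Finset.range (r-2)).image fun s =>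
        (F.verts.sup id + 1) + (p.1 * (F.verts.sup id + 1) + p.2) * r + s))))

/-- A `2`-graph is a tree on `k` vertices: `k` vertices, `k−1` edges, connected. -/
def IsTreeGraph (k : ℕ) (T : HGraph 2) : Prop :=
  T.verts.card = k ∧ T.edges.card = k - 1 ∧
  ∀ S : Finset ℕ, S ⊆ T.verts → S.Nonempty → S ≠ T.verts →
    ∃ e ∈ T.edges, (e ∩ S).Nonempty ∧ (e \ S).Nonempty

/-- `T` satisfies the Erdős–Sós property for `k`: every graph with average degree
greater than `k−2` contains `T`. -/
def ErdosSos (k : ℕ) (T : HGraph 2) : Prop :=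
  ∀ G : HGraph 2, ((k : ℝ) - 2) * (G.verts.card : ℝ) < 2 * (G.edges.card : ℝ) →
    T.IsCopyIn G

/-- The `(r−2)`-expansion `Exp(T)` of a `2`-graph `T`: enlarge every edge by one
common fixed set of `r−2` new vertices. -/
def expTree (r : ℕ) (T : HGraph 2) : HGraph r :=
  HGraph.ofEdges r
    (T.verts ∪ ((Finset.range (r-2)).image fun s => T.verts.sup id + 1 + s))
    (T.edges.image fun e =>
      e ∪ ((Finset.range (r-2)).image fun s => T.verts.sup id + 1 + s))

/-- The chromatic number of a `2`-graph. -/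
noncomputable def chrom (F : HGraph 2) : ℕ :=
  sInf {k | ∃ c : ℕ → ℕ, (∀ v ∈ F.verts, c v < k) ∧
    ∀ e ∈ F.edges, ∀ u ∈ e, ∀ v ∈ e, u ≠ v → c u ≠ c v}

/-- A graph is edge-critical if deleting some edge lowers its chromatic number. -/
def EdgeCritical (F : HGraph 2) : Prop :=
  ∃ e ∈ F.edges, chrom (HGraph.ofEdges 2 F.verts (F.edges.erase e)) < chrom F

/-- `H` is semibipartite: the vertex set splits into `V₁ ∪ V₂` so that every edge
has exactly one vertex in `V₁`. -/
def Semibipartite (r : ℕ) (H : HGraph r) : Prop :=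
  ∃ V₁ ⊆ H.verts, ∀ e ∈ H.edges, (e ∩ V₁).card = 1

/-- `H` is a `K_ℓ^r`-subconstruction, i.e. an `ℓ`-partite `r`-graph. -/
def IsKlSub (r ℓ : ℕ) (H : HGraph r) : Prop :=
  ∃ f : ℕ → ℕ, (∀ v ∈ H.verts, f v < ℓ) ∧
    ∀ e ∈ H.edges, ∀ u ∈ e, ∀ v ∈ e, f u = f v → u = v

/-- The Lagrangian `λ(W)` of an `r`-graph `W`, viewing `W` as a pattern. -/
noncomputable def hgLagrangian (r : ℕ) (W : HGraph r) : ℝ :=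
  limUnder atTop fun n : ℕ =>
    ((sSup {m | ∃ G : HGraph r, IsBlowupOf W G ∧ G.verts.card = n ∧ G.edges.card = m} : ℕ) : ℝ)
      / (n.choose r : ℝ)

/-- The `r`-graph `B(r,ℓ+1)`. -/
def BGraph (r ℓ : ℕ) : HGraph r :=
  HGraph.ofEdges r (Finset.Icc 1 (ℓ+1))
    (insert (Finset.Icc 1 r)
      ((Finset.powersetCard r (Finset.Icc 2 (ℓ+1))).filter
        fun e => (e ∩ Finset.Icc 2 r).card ≤ 1))

/-- The `r`-uniform matching of size two, `M_2^r`. -/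
def matching2 (r : ℕ) : HGraph r :=
  HGraph.ofEdges r (Finset.Icc 1 (2*r)) {Finset.Icc 1 r, Finset.Icc (r+1) (2*r)}

/-- The expanded triangle `𝓒_3^{2r}`. -/
def expandedTriangle (r : ℕ) : HGraph (2*r) :=
  HGraph.ofEdges (2*r) (Finset.Icc 1 (3*r))
    {Finset.Icc 1 (2*r), Finset.Icc (r+1) (3*r), Finset.Icc 1 r ∪ Finset.Icc (2*r+1) (3*r)}

/-- The `4`-graph `𝔽_{4,3}`. -/
def F43 : HGraph 4 :=
  HGraph.ofEdges 4 (Finset.Icc 1 7)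
    {({1,2,3,4} : Finset ℕ), {1,2,3,5}, {1,2,3,6}, {1,2,3,7}, {4,5,6,7}}

/-- The `3`-graph `𝔽_{3,2}`. -/
def F32 : HGraph 3 :=
  HGraph.ofEdges 3 (Finset.Icc 1 5)
    {({1,2,3} : Finset ℕ), {1,2,4}, {1,2,5}, {3,4,5}}

/-- `H` contains pairwise vertex-disjoint copies of `F i`, `ts i` many of each. -/
def HasMixedMatching (r k : ℕ) (F : Fin k → HGraph r) (ts : Fin k → ℕ)
    (H : HGraph r) : Prop :=
  ∃ S : (i : Fin k) → Fin (ts i) → Finset ℕ,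
    (∀ i j, S i j ⊆ H.verts ∧ (S i j).card = (F i).verts.card) ∧
    (∀ p q : Σ i : Fin k, Fin (ts i), p ≠ q → Disjoint (S p.1 p.2) (S q.1 q.2)) ∧
    ∀ i j, (F i).IsCopyIn (H.induce (S i j))

/-- `ex(n, ⊔ᵢ tᵢ Fᵢ)`. -/
noncomputable def exMixedN (r k : ℕ) (F : Fin k → HGraph r) (ts : Fin k → ℕ)
    (n : ℕ) : ℕ :=
  sSup {m | ∃ H : HGraph r, H.verts.card = n ∧ ¬ HasMixedMatching r k F ts H ∧
    H.edges.card = m}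

/-- `ex(n, {F₁,…,F_k})`. -/
noncomputable def exFamN (r k : ℕ) (F : Fin k → HGraph r) (n : ℕ) : ℕ :=
  sSup {m | ∃ H : HGraph r, H.verts.card = n ∧ (∀ i, ¬ (F i).IsCopyIn H) ∧
    H.edges.card = m}

/-
Call a vertex heavy in `H i` if its degree exceeds `D = (π + 10δ) C(n, r - 1)`, where
`δ = (1 - π) / (32 m)`, and take a maximal set `I` of indices that admit distinct heavy vertices
`v i` as representatives. The copies of `F` are found greedily, the indices outside `I` first.

If `i ∉ I`, then by maximality every heavy vertex of `H i` is a representative. Deleting the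
representatives leaves at least `C(n - |I|, r) - C(n - t, r) + ex(n - t, F)` edges of `H i`, which
exceeds `ex(n - t, F)` by about `s C(n, r - 1)`, where `s = t - |I|`. Avoiding the copies found so
far means deleting at most `m s` further vertices, none of them heavy, at a cost of at most
`m s D`. By smoothness the Turán number of the remaining `n - t + s - m s` vertices is smaller than
`ex(n - t, F)` by about `(m - 1) s π C(n, r - 1)`. Since `m (π + 10δ)` is well below
`1 + (m - 1) π`, a copy of `F` remains.

If `i ∈ I`, at most `(m + 1) t` vertices have to be avoided. After deleting them the heavy vertex
`v i` still has a degree larger than boundedness allows in an `F`-free graph whose average degree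
is as large as that of the remaining graph, so again there is a copy of `F`.
-/

section Selection

variable {ι α : Type*}

theorem card_le_card_filter_disjoint_add_sum [DecidableEq α] (E : Finset (Finset α))
    (B : Finset α) :
    E.card ≤ (E.filter (Disjoint · B)).card + ∑ u ∈ B, (E.filter (u ∈ ·)).card := by
  have hcover : E ⊆ E.filter (Disjoint · B) ∪ B.biUnion fun u => E.filter (u ∈ ·) := by
    intro e he
    by_cases hd : Disjoint e B
    · exact Finset.mem_union_left _ (Finset.mem_filter.mpr ⟨he, hd⟩)
    · obtain ⟨u, hue, huB⟩ := Finset.not_disjoint_iff.mp hd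
      exact Finset.mem_union_right _
        (Finset.mem_biUnion.mpr ⟨u, huB, Finset.mem_filter.mpr ⟨he, hue⟩⟩)
  calc E.card ≤ _ := Finset.card_le_card hcover
    _ ≤ _ := Finset.card_union_le _ _
    _ ≤ _ := Nat.add_le_add_left Finset.card_biUnion_le _

theorem exists_maximal_distinct_representatives [Finite ι] [Nonempty α]
    [DecidableEq α] (P : ι → α → Prop) :
    ∃ (I : Finset ι) (v : ι → α), Set.InjOn v I ∧ (∀ i ∈ I, P i (v i)) ∧
      ∀ i ∉ I, ∀ u, P i u → u ∈ I.image v := by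
  classical
  obtain ⟨I, ⟨v, hinj, hP⟩, hmax⟩ := (Set.toFinite
    {I : Finset ι | ∃ v : ι → α, Set.InjOn v I ∧ ∀ i ∈ I, P i (v i)}).exists_maximal
    ⟨∅, fun _ => Classical.arbitrary α, by simp⟩
  refine ⟨I, v, hinj, hP, fun i hi u hu => ?_⟩
  by_contra hnew
  have hagree : Set.EqOn v (Function.update v i u) I := fun j hj =>
    (Function.update_of_ne (ne_of_mem_of_not_mem hj hi) u v).symm
  refine hi (hmax (y := insert i I) ⟨Function.update v i u, ?_, ?_⟩
    (Finset.subset_insert i I) (Finset.mem_insert_self i I))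
  · rw [Finset.coe_insert, Set.injOn_insert (by exact_mod_cast hi)]
    refine ⟨hinj.congr hagree, ?_⟩
    rwa [Function.update_self, ← hagree.image_eq, ← Finset.coe_image, Finset.mem_coe]
  · refine (Finset.forall_mem_insert _ _ _).mpr ⟨by rwa [Function.update_self], fun j hj => ?_⟩
    exact hagree hj ▸ hP j hj

theorem exists_pairwiseDisjoint_extension [DecidableEq ι] [PartialOrder α] [OrderBot α]
    {P : ι → α → Prop} {K L : Finset ι} (hKL : Disjoint K L) {S₀ : ι → α}
    (hP₀ : ∀ i ∈ K, P i (S₀ i)) (hS₀ : (K : Set ι).PairwiseDisjoint S₀)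
    (hstep : ∀ i ∈ L, ∀ J ⊆ (K ∪ L).erase i, ∀ S : ι → α, (∀ j ∈ J, P j (S j)) →
      ∃ T, P i T ∧ ∀ j ∈ J, Disjoint T (S j)) :
    ∃ S : ι → α, (∀ i ∈ K ∪ L, P i (S i)) ∧ ((K ∪ L : Finset ι) : Set ι).PairwiseDisjoint S := by
  induction L using Finset.induction_on with
  | empty => exact ⟨S₀, by simpa using hP₀, by simpa using hS₀⟩
  | insert i L hiL ih =>
    rw [Finset.disjoint_insert_right] at hKL
    have hi : i ∉ K ∪ L := by simp [hKL.1, hiL]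
    have hsub : K ∪ L ⊆ K ∪ insert i L :=
      Finset.union_subset_union_right (Finset.subset_insert i L)
    obtain ⟨S, hP, hS⟩ := ih hKL.2 fun j hj J hJ =>
      hstep j (Finset.mem_insert_of_mem hj) J (hJ.trans (Finset.erase_subset_erase j hsub))
    obtain ⟨T, hT, hdisj⟩ := hstep i (Finset.mem_insert_self i L) (K ∪ L)
      (Finset.subset_erase.mpr ⟨hsub, hi⟩) S hP
    have hagree : ∀ j ∈ K ∪ L, Function.update S i T j = S j := fun j hj =>
      Function.update_of_ne (ne_of_mem_of_not_mem hj hi) T S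
    refine ⟨Function.update S i T, ?_, ?_⟩
    · rw [Finset.union_insert]
      refine (Finset.forall_mem_insert _ _ _).mpr ⟨by rwa [Function.update_self], fun j hj => ?_⟩
      exact (hagree j hj).symm ▸ hP j hj
    · rw [Finset.union_insert, Finset.coe_insert]
      refine Set.PairwiseDisjoint.insert_of_notMem ?_ (by exact_mod_cast hi) fun j hj => ?_
      · intro j hj k hk hjk
        simpa only [Function.onFun, hagree j hj, hagree k hk] using hS hj hk hjk
      · simpa only [Function.update_self, hagree j hj] using hdisj j hj

end Selection

namespace HGraph

variable {r : ℕ}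

/-- The `r`-graph `H - B` obtained by deleting the vertices in `B`, which need not all be
vertices of `H`. -/
def deleteVerts (H : HGraph r) (B : Finset ℕ) : HGraph r :=
  ofEdges r (H.verts \ B) (H.edges.filter fun e => Disjoint e B)

/-- `S` spans a copy of `F` in `H`: it is an `|V(F)|`-set of vertices and `H[S]` contains `F`. -/
def SpansCopy (F H : HGraph r) (S : Finset ℕ) : Prop :=
  S ⊆ H.verts ∧ S.card = F.verts.card ∧ F.IsCopyIn (H.induce S)

theorem edges_deleteVerts (H : HGraph r) (B : Finset ℕ) :
    (H.deleteVerts B).edges = H.edges.filter (Disjoint · B) :=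
  Finset.filter_true_of_mem fun e he =>
    have he := Finset.mem_filter.mp he
    ⟨Finset.subset_sdiff.mpr ⟨H.edges_sub e he.1, he.2⟩, H.edges_card e he.1⟩

theorem mem_edges_induce {H : HGraph r} {S e : Finset ℕ} :
    e ∈ (H.induce S).edges ↔ e ∈ H.edges ∧ e ⊆ S := by
  refine ⟨fun he => Finset.mem_filter.mp (Finset.mem_filter.mp he).1, fun he => ?_⟩
  exact Finset.mem_filter.mpr ⟨Finset.mem_filter.mpr he,
    Finset.subset_inter (H.edges_sub e he.1) he.2, H.edges_card e he.1⟩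

theorem IsCopyIn.mono {F H H' : HGraph r} (h : F.IsCopyIn H) (hverts : H.verts ⊆ H'.verts)
    (hedges : H.edges ⊆ H'.edges) : F.IsCopyIn H' :=
  let ⟨f, hinj, hfv, hfe⟩ := h
  ⟨f, hinj, fun v hv => hverts (hfv v hv), fun e he => hedges (hfe e he)⟩

theorem IsCopyIn.deleteVerts_anti {F H : HGraph r} {B B' : Finset ℕ} (hB : B ⊆ B')
    (h : F.IsCopyIn (H.deleteVerts B')) : F.IsCopyIn (H.deleteVerts B) := by
  refine h.mono (Finset.sdiff_subset_sdiff subset_rfl hB) ?_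
  simp only [edges_deleteVerts]
  exact Finset.monotone_filter_right _ fun e _ he => Finset.disjoint_of_subset_right hB he

theorem IsCopyIn.exists_spansCopy {F H : HGraph r} {B : Finset ℕ}
    (h : F.IsCopyIn (H.deleteVerts B)) : ∃ S, F.SpansCopy H S ∧ Disjoint S B := by
  obtain ⟨f, hinj, hfv, hfe⟩ := h
  have hS : F.verts.image f ⊆ H.verts \ B := Finset.image_subset_iff.mpr hfv
  refine ⟨F.verts.image f, ⟨hS.trans Finset.sdiff_subset, Finset.card_image_of_injOn hinj,
    f, hinj, fun v hv => ?_, fun e he => ?_⟩, (Finset.subset_sdiff.mp hS).2⟩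
  · exact Finset.mem_inter.mpr ⟨(Finset.mem_sdiff.mp (hfv v hv)).1, Finset.mem_image_of_mem f hv⟩
  · have := hfe e he
    rw [edges_deleteVerts] at this
    exact mem_edges_induce.mpr
      ⟨(Finset.mem_filter.mp this).1, Finset.image_subset_image (F.edges_sub e he)⟩

theorem card_filter_superset_le_choose (H : HGraph r) (A : Finset ℕ) :
    (H.edges.filter (A ⊆ ·)).card ≤ (H.verts.card - A.card).choose (r - A.card) := by
  rcases (H.edges.filter (A ⊆ ·)).eq_empty_or_nonempty with hempty | ⟨e₀, he₀⟩
  · simp [hempty]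
  have hA : A ⊆ H.verts :=
    (Finset.mem_filter.mp he₀).2.trans (H.edges_sub e₀ (Finset.mem_filter.mp he₀).1)
  rw [← Finset.card_sdiff_of_subset hA, ← Finset.card_powersetCard]
  refine Finset.card_le_card_of_injOn (· \ A) (fun e he => ?_) fun e he e' he' h => ?_
  · obtain ⟨he, hAe⟩ := Finset.mem_filter.mp (Finset.mem_coe.mp he)
    refine Finset.mem_coe.mpr (Finset.mem_powersetCard.mpr
      ⟨Finset.sdiff_subset_sdiff (H.edges_sub e he) subset_rfl, ?_⟩)
    rw [Finset.card_sdiff_of_subset hAe, H.edges_card e he]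
  · rw [← Finset.sdiff_union_of_subset (Finset.mem_filter.mp he).2, show e \ A = e' \ A from h,
      Finset.sdiff_union_of_subset (Finset.mem_filter.mp he').2]

theorem card_edges_le_choose (H : HGraph r) : H.edges.card ≤ H.verts.card.choose r := by
  simpa using H.card_filter_superset_le_choose ∅

theorem deg_le_choose (H : HGraph r) (v : ℕ) :
    H.deg v ≤ (H.verts.card - 1).choose (r - 1) := by
  simpa [deg] using H.card_filter_superset_le_choose {v}

theorem codegree_le_choose (H : HGraph r) {u v : ℕ} (huv : u ≠ v) :
    (H.edges.filter fun e => u ∈ e ∧ v ∈ e).card ≤ (H.verts.card - 2).choose (r - 2) := by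
  simpa [Finset.insert_subset_iff, Finset.card_pair huv] using
    H.card_filter_superset_le_choose {u, v}

theorem card_edges_deleteVerts_le_add_sum_deg (H : HGraph r) (L B : Finset ℕ) :
    (H.deleteVerts L).edges.card ≤ (H.deleteVerts (L ∪ B)).edges.card + ∑ u ∈ B, H.deg u := by
  simp only [edges_deleteVerts, Finset.disjoint_union_right, ← Finset.filter_filter]
  refine (card_le_card_filter_disjoint_add_sum _ B).trans
    (Nat.add_le_add_left (Finset.sum_le_sum fun u _ => Finset.card_le_card ?_) _)
  exact Finset.filter_subset_filter _ (Finset.filter_subset _ _)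

theorem card_edges_le_deleteVerts_add (H : HGraph r) (B : Finset ℕ) :
    H.edges.card ≤
      (H.deleteVerts B).edges.card + B.card * (H.verts.card - 1).choose (r - 1) := by
  rw [edges_deleteVerts]
  refine (card_le_card_filter_disjoint_add_sum _ B).trans (Nat.add_le_add_left ?_ _)
  exact (Finset.sum_le_card_nsmul _ _ _ fun u _ => H.deg_le_choose u)

theorem deg_le_deg_deleteVerts_add (H : HGraph r) {B : Finset ℕ} {v : ℕ} (hv : v ∉ B) :
    H.deg v ≤ (H.deleteVerts B).deg v + B.card * (H.verts.card - 2).choose (r - 2) := by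
  rw [deg, deg, edges_deleteVerts, Finset.filter_comm]
  refine (card_le_card_filter_disjoint_add_sum _ B).trans (Nat.add_le_add_left ?_ _)
  refine Finset.sum_le_card_nsmul _ _ _ fun u hu => ?_
  rw [Finset.filter_filter]
  exact H.codegree_le_choose (ne_of_mem_of_not_mem hu hv).symm

theorem card_edges_add_choose_le (H : HGraph r) {B : Finset ℕ} (hB : B ⊆ H.verts) :
    H.edges.card + (H.verts.card - B.card).choose r ≤
      (H.deleteVerts B).edges.card + H.verts.card.choose r := by
  rw [← Finset.card_sdiff_of_subset hB, ← Finset.card_powersetCard r (H.verts \ B),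
    ← Finset.card_powersetCard r H.verts]
  set full := Finset.powersetCard r H.verts
  have hsub : Finset.powersetCard r (H.verts \ B) ⊆ full :=
    Finset.powersetCard_mono Finset.sdiff_subset
  have hcover : H.edges ⊆
      (H.deleteVerts B).edges ∪ (full \ Finset.powersetCard r (H.verts \ B)) := by
    intro e he
    have hefull := Finset.mem_powersetCard.mpr ⟨H.edges_sub e he, H.edges_card e he⟩
    by_cases hd : Disjoint e B
    · exact Finset.mem_union_left _ (by
        rw [edges_deleteVerts]; exact Finset.mem_filter.mpr ⟨he, hd⟩)
    · refine Finset.mem_union_right _ (Finset.mem_sdiff.mpr ⟨hefull, fun h => hd ?_⟩)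
      exact (Finset.subset_sdiff.mp (Finset.mem_powersetCard.mp h).1).2
  have hcard := (Finset.card_le_card hcover).trans (Finset.card_union_le _ _)
  have hle := Finset.card_le_card hsub
  rw [Finset.card_sdiff_of_subset hsub] at hcard
  omega

end HGraph

section TuranNumbers

variable {r : ℕ} {F : HGraph r}

theorem card_edges_le_exN {H : HGraph r} (h : ¬ F.IsCopyIn H) :
    H.edges.card ≤ exN r H.verts.card F := by
  refine le_csSup ⟨H.verts.card.choose r, ?_⟩ ⟨H, rfl, h, rfl⟩
  rintro _ ⟨G, hG, -, rfl⟩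
  exact hG ▸ G.card_edges_le_choose

theorem isCopyIn_deleteVerts_of_exN_lt {H : HGraph r} {B : Finset ℕ} (hB : B ⊆ H.verts)
    (h : exN r (H.verts.card - B.card) F < (H.deleteVerts B).edges.card) :
    F.IsCopyIn (H.deleteVerts B) := by
  by_contra hfree
  refine absurd (card_edges_le_exN hfree) (not_le.mpr ?_)
  rwa [← Finset.card_sdiff_of_subset hB] at h

theorem isCopyIn_deleteVerts_union_of_forall_deg_le {H : HGraph r} {n : ℕ}
    (hn : H.verts.card = n) {L B : Finset ℕ} {b : ℕ} {D : ℝ} (hL : L ⊆ H.verts)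
    (hB : B ⊆ H.verts \ L) (hBb : B.card ≤ b) (hbn : b ≤ n - L.card)
    (hdeg : ∀ u ∈ H.verts \ L, (H.deg u : ℝ) ≤ D)
    (h : exN r (n - L.card - b) F + b * D + (n.choose r : ℝ) <
      H.edges.card + ((n - L.card).choose r : ℝ)) :
    F.IsCopyIn (H.deleteVerts (L ∪ B)) := by
  obtain ⟨C, hBC, hC, rfl⟩ : ∃ C, B ⊆ C ∧ C ⊆ H.verts \ L ∧ C.card = b :=
    Finset.exists_subsuperset_card_eq hB hBb (by rwa [Finset.card_sdiff_of_subset hL, hn])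
  obtain ⟨hCV, hCL⟩ := Finset.subset_sdiff.mp hC
  refine HGraph.IsCopyIn.deleteVerts_anti (Finset.union_subset_union_right hBC)
    (isCopyIn_deleteVerts_of_exN_lt (Finset.union_subset hL hCV) ?_)
  rw [Finset.card_union_of_disjoint hCL.symm, ← Nat.sub_sub, hn]
  have hdelL : (H.edges.card : ℝ) + ((n - L.card).choose r : ℝ) ≤
      (H.deleteVerts L).edges.card + (n.choose r : ℝ) := by
    exact_mod_cast hn ▸ H.card_edges_add_choose_le hL
  have hdelC : ((H.deleteVerts L).edges.card : ℝ) ≤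
      (H.deleteVerts (L ∪ C)).edges.card + ∑ u ∈ C, (H.deg u : ℝ) := by
    exact_mod_cast H.card_edges_deleteVerts_le_add_sum_deg L C
  have hsum : ∑ u ∈ C, (H.deg u : ℝ) ≤ C.card * D := by
    simpa only [nsmul_eq_mul] using Finset.sum_le_card_nsmul C _ D fun u hu => hdeg u (hC hu)
  exact_mod_cast (by linarith : (exN r (n - L.card - C.card) F : ℝ) <
    (H.deleteVerts (L ∪ C)).edges.card)

theorem BoundedAt.isCopyIn_of_lt_deg {n : ℕ} {f₁ f₂ : ℝ} (hbdd : BoundedAt r n F f₁ f₂)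
    {H : HGraph r} (hn : H.verts.card = n) {v : ℕ} (hv : v ∈ H.verts)
    (hdeg : dN r n F + f₂ < H.deg v)
    (hedges : r * ((exN r n F : ℝ) - H.edges.card) ≤ f₁ * n) : F.IsCopyIn H := by
  by_contra hfree
  have hn0 : (0 : ℝ) < n := by exact_mod_cast hn ▸ Finset.card_pos.mpr ⟨v, hv⟩
  have havg : dN r n F - f₁ ≤ H.avgDeg := by
    rw [dN, HGraph.avgDeg, hn, sub_le_iff_le_add, div_add' _ _ _ hn0.ne',
      div_le_div_iff_of_pos_right hn0]
    linarith
  have hmax : (H.deg v : ℝ) ≤ H.maxDeg := by exact_mod_cast Finset.le_sup (f := H.deg) hv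
  exact (hdeg.trans_le hmax).not_ge (hbdd H hn hfree havg)

theorem BoundedAt.isCopyIn_deleteVerts_of_lt_deg {n k : ℕ} {f₁ f₂ : ℝ}
    (hbdd : BoundedAt r (n - k) F f₁ f₂) {H : HGraph r} (hn : H.verts.card = n)
    {B : Finset ℕ} (hB : B ⊆ H.verts) (hBk : B.card ≤ k) (hkn : k + 1 ≤ n)
    {v : ℕ} (hv : v ∈ H.verts) (hvB : v ∉ B)
    (hdeg : dN r (n - k) F + f₂ + k * ((n - 2).choose (r - 2) : ℝ) < H.deg v)
    (hedges : r * ((exN r (n - k) F : ℝ) + k * ((n - 1).choose (r - 1) : ℝ) - H.edges.card) ≤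
      f₁ * (n - k : ℕ)) :
    F.IsCopyIn (H.deleteVerts B) := by
  obtain ⟨C, hBC, hCv, hC⟩ : ∃ C, B ⊆ C ∧ C ⊆ H.verts.erase v ∧ C.card = k :=
    Finset.exists_subsuperset_card_eq (Finset.subset_erase.mpr ⟨hB, hvB⟩) hBk
      (by rw [Finset.card_erase_of_mem hv]; omega)
  obtain ⟨hCV, hvC⟩ := Finset.subset_erase.mp hCv
  have hdel : (H.edges.card : ℝ) ≤
      (H.deleteVerts C).edges.card + k * ((n - 1).choose (r - 1) : ℝ) := by
    exact_mod_cast hn ▸ hC ▸ H.card_edges_le_deleteVerts_add C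
  have hdegdel : (H.deg v : ℝ) ≤
      (H.deleteVerts C).deg v + k * ((n - 2).choose (r - 2) : ℝ) := by
    exact_mod_cast hn ▸ hC ▸ H.deg_le_deg_deleteVerts_add hvC
  refine HGraph.IsCopyIn.deleteVerts_anti hBC (hbdd.isCopyIn_of_lt_deg ?_
    (Finset.mem_sdiff.mpr ⟨hv, hvC⟩) (by linarith) (le_trans ?_ hedges))
  · exact (Finset.card_sdiff_of_subset hCV).trans (by rw [hn, hC])
  · exact mul_le_mul_of_nonneg_left (by linarith) (Nat.cast_nonneg r)

end TuranNumbers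

section RainbowMatching

variable {r : ℕ} {F : HGraph r}

theorem exists_spansCopy_extension {ι : Type*} [DecidableEq ι] {H : ι → HGraph r}
    {V : Finset ℕ} (hV : ∀ i, (H i).verts = V) {W : ι → Finset ℕ} {K L : Finset ι}
    (hKL : Disjoint K L) {S₀ : ι → Finset ℕ}
    (hspan₀ : ∀ i ∈ K, F.SpansCopy (H i) (S₀ i) ∧ Disjoint (S₀ i) (W i))
    (hS₀ : (K : Set ι).PairwiseDisjoint S₀)
    (hcopy : ∀ i ∈ L, ∀ B ⊆ V, B.card ≤ F.verts.card * ((K ∪ L).erase i).card →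
      (∀ x ∈ B, ∃ j ∈ (K ∪ L).erase i, x ∉ W j) → F.IsCopyIn ((H i).deleteVerts (W i ∪ B))) :
    ∃ S : ι → Finset ℕ, (∀ i ∈ K ∪ L, F.SpansCopy (H i) (S i) ∧ Disjoint (S i) (W i)) ∧
      ((K ∪ L : Finset ι) : Set ι).PairwiseDisjoint S := by
  refine exists_pairwiseDisjoint_extension
    (P := fun i T => F.SpansCopy (H i) T ∧ Disjoint T (W i)) hKL hspan₀ hS₀ ?_
  intro i hi J hJ S hS
  have hunionV : J.biUnion S ⊆ V :=
    Finset.biUnion_subset.mpr fun j hj => hV j ▸ (hS j hj).1.1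
  have hunion_card : (J.biUnion S).card ≤ J.card * F.verts.card :=
    Finset.card_biUnion_le_card_mul _ _ _ fun j hj => (hS j hj).1.2.1.le
  have havoid : ∀ x ∈ J.biUnion S, ∃ j ∈ (K ∪ L).erase i, x ∉ W j := fun x hx =>
    let ⟨j, hj, hxj⟩ := Finset.mem_biUnion.mp hx
    ⟨j, hJ hj, Finset.disjoint_left.mp (hS j hj).2 hxj⟩
  obtain ⟨T, hT, hdisj⟩ := (hcopy i hi _ hunionV (hunion_card.trans (by
    rw [mul_comm]; exact Nat.mul_le_mul_left _ (Finset.card_le_card hJ))) havoid).exists_spansCopy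
  rw [Finset.disjoint_union_right, Finset.disjoint_biUnion_right] at hdisj
  exact ⟨T, ⟨hT, hdisj.1⟩, hdisj.2⟩

variable {t : ℕ} {H : Fin (t + 1) → HGraph r} {V : Finset ℕ}

theorem hasRainbowMatching_of_representatives (hV : ∀ i, (H i).verts = V)
    {I : Finset (Fin (t + 1))} {v : Fin (t + 1) → ℕ}
    (hlow : ∀ i ∉ I, ∀ B ⊆ V, Disjoint (I.image v) B →
      B.card ≤ F.verts.card * (t - I.card) → F.IsCopyIn ((H i).deleteVerts (I.image v ∪ B)))
    (hhigh : ∀ i ∈ I, ∀ B ⊆ V, v i ∉ B → B.card ≤ F.verts.card * t →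
      F.IsCopyIn ((H i).deleteVerts ((I.erase i).image v ∪ B))) :
    HasRainbowMatching r t F H := by
  -- Every copy avoids the representatives of all other indices, so that `v i` survives
  -- until index `i` is treated.
  let W : Fin (t + 1) → Finset ℕ := fun i => (I.erase i).image v
  have hW : ∀ i ∉ I, W i = I.image v := fun i hi => by simp only [W, Finset.erase_eq_of_notMem hi]
  obtain ⟨S₀, hspan₀, hS₀⟩ := exists_spansCopy_extension (F := F) hV (W := W) (L := Iᶜ)
    (Finset.disjoint_empty_left _) (S₀ := fun _ => ∅) (by simp) (by simp) <| by
      simp only [Finset.empty_union, Finset.mem_compl]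
      intro i hi B hB hBcard havoid
      rw [hW i hi]
      refine hlow i hi B hB (Finset.disjoint_right.mpr fun x hx => ?_) ?_
      · obtain ⟨j, hj, hxj⟩ := havoid x hx
        exact hW j (Finset.mem_compl.mp (Finset.mem_of_mem_erase hj)) ▸ hxj
      · rwa [Finset.card_erase_of_mem (Finset.mem_compl.mpr hi), Finset.card_compl,
          Fintype.card_fin, Nat.sub_right_comm, Nat.add_sub_cancel] at hBcard
  have huniv : ∅ ∪ Iᶜ ∪ I = Finset.univ := by
    rw [Finset.empty_union, Finset.union_comm, Finset.union_compl]
  obtain ⟨S, hspan, hS⟩ := exists_spansCopy_extension (F := F) hV (W := W) (L := I)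
    (by simpa using disjoint_compl_left) hspan₀ hS₀ <| by
      rw [huniv]
      intro i hi B hB hBcard havoid
      refine hhigh i hi B hB (fun hvi => ?_) ?_
      · obtain ⟨j, hj, hvij⟩ := havoid _ hvi
        exact hvij (Finset.mem_image_of_mem v
          (Finset.mem_erase.mpr ⟨(Finset.ne_of_mem_erase hj).symm, hi⟩))
      · rwa [Finset.card_erase_of_mem (Finset.mem_univ i), Finset.card_fin,
          Nat.add_sub_cancel] at hBcard
  simp only [huniv, Finset.mem_univ, forall_const] at hspan hS
  exact ⟨S, fun i => ⟨(hspan i).1.1, (hspan i).1.2.1⟩,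
    fun i j hij => hS (by simp) (by simp) hij, fun i => (hspan i).1.2.2⟩

theorem hasRainbowMatching_of_isCopyIn_deleteVerts (hV : ∀ i, (H i).verts = V) {D : ℝ}
    (hlow : ∀ i, ∀ L ⊆ V, ∀ B ⊆ V \ L, (∀ u ∈ V \ L, ((H i).deg u : ℝ) ≤ D) →
      L.card ≤ t → B.card ≤ F.verts.card * (t - L.card) →
      F.IsCopyIn ((H i).deleteVerts (L ∪ B)))
    (hhigh : ∀ i, ∀ v ∈ V, D < (H i).deg v → ∀ B ⊆ V, v ∉ B →
      B.card ≤ (F.verts.card + 1) * t → F.IsCopyIn ((H i).deleteVerts B)) :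
    HasRainbowMatching r t F H := by
  obtain ⟨I, v, hinj, hv, hmax⟩ := exists_maximal_distinct_representatives
    fun i u => u ∈ V ∧ D < (H i).deg u
  have himage : ∀ J ⊆ I, J.image v ⊆ V := fun J hJ =>
    Finset.image_subset_iff.mpr fun j hj => (hv j (hJ hj)).1
  refine hasRainbowMatching_of_representatives hV (I := I) (v := v) ?_ ?_
  · intro i hi B hB hdisj hBcard
    have hIcard : (I.image v).card = I.card := Finset.card_image_of_injOn hinj
    refine hlow i _ (himage I subset_rfl) B (Finset.subset_sdiff.mpr ⟨hB, hdisj.symm⟩)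
      (fun u hu => ?_) ?_ (hIcard.symm ▸ hBcard)
    · by_contra! hD
      exact (Finset.mem_sdiff.mp hu).2 (hmax i hi u ⟨(Finset.mem_sdiff.mp hu).1, hD⟩)
    · have := Finset.card_lt_univ_of_notMem hi
      rw [Fintype.card_fin] at this
      omega
  · intro i hi B hB hvB hBcard
    refine hhigh i (v i) (hv i hi).1 (hv i hi).2 _
      (Finset.union_subset (himage _ (Finset.erase_subset i I)) hB) ?_ ?_
    · refine Finset.notMem_union.mpr ⟨fun h => ?_, hvB⟩
      obtain ⟨j, hj, hji⟩ := Finset.mem_image.mp h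
      exact Finset.ne_of_mem_erase hj (hinj (Finset.mem_of_mem_erase hj) hi hji)
    · have hIcard : ((I.erase i).image v).card ≤ t := by
        have := Finset.card_le_univ I
        rw [Fintype.card_fin] at this
        exact Finset.card_image_le.trans (by rw [Finset.card_erase_of_mem hi]; omega)
      linarith [Finset.card_union_le ((I.erase i).image v) B]

theorem hasRainbowMatching_of_boundedAt (hV : ∀ i, (H i).verts = V) {n k m : ℕ}
    (hn : V.card = n) (hm : F.verts.card = m) (hk : (m + 1) * t = k) (hkn : k + 1 ≤ n)
    (hedges : ∀ i, n.choose r - (n - t).choose r + exN r (n - t) F < (H i).edges.card)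
    {D f₁ f₂ : ℝ} (hbdd : BoundedAt r (n - k) F f₁ f₂)
    (hD : dN r (n - k) F + f₂ + k * ((n - 2).choose (r - 2) : ℝ) ≤ D)
    (hlow : ∀ s ≤ t, exN r (n - t + s - m * s) F + (m * s : ℕ) * D + ((n - t).choose r : ℝ) ≤
      ((n - t + s).choose r : ℝ) + exN r (n - t) F)
    (hhigh : r * ((exN r (n - k) F : ℝ) + k * ((n - 1).choose (r - 1) : ℝ) -
      exN r (n - t) F) ≤ f₁ * (n - k : ℕ)) :
    HasRainbowMatching r t F H := by
  subst hn hm hk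
  have hedges' : ∀ i, (V.card.choose r : ℝ) + exN r (V.card - t) F <
      (H i).edges.card + ((V.card - t).choose r : ℝ) := fun i => by
    have := hedges i
    norm_cast
    omega
  have hex : ∀ i, (exN r (V.card - t) F : ℝ) ≤ (H i).edges.card := fun i => by
    exact_mod_cast (Nat.le_add_left _ _).trans (hedges i).le
  rw [add_one_mul] at hkn
  refine hasRainbowMatching_of_isCopyIn_deleteVerts hV (D := D) ?_ ?_
  · intro i L hL B hB hdeg hLt hBcard
    have hVL : V.card - t + (t - L.card) = V.card - L.card := by omega
    have hm_le : F.verts.card * (t - L.card) ≤ F.verts.card * t :=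
      Nat.mul_le_mul_left _ (Nat.sub_le _ _)
    rw [← hV i] at hL hB hdeg
    refine isCopyIn_deleteVerts_union_of_forall_deg_le (congrArg Finset.card (hV i)) hL hB hBcard
      (by omega) hdeg ?_
    have := hlow (t - L.card) (Nat.sub_le _ _)
    rw [hVL] at this
    linarith [hedges' i]
  · intro i v hv hdeg B hB hvB hBcard
    rw [← hV i] at hv hB
    refine hbdd.isCopyIn_deleteVerts_of_lt_deg (congrArg Finset.card (hV i)) hB hBcard
      (by linarith) hv hvB (hD.trans_lt hdeg) (le_trans ?_ hhigh)
    exact mul_le_mul_of_nonneg_left (by linarith [hex i]) (Nat.cast_nonneg r)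

theorem hasRainbowMatching_zero {H : Fin 1 → HGraph r} {n : ℕ}
    (hn : ∀ i, (H i).verts.card = n) (hedges : ∀ i, exN r n F < (H i).edges.card) :
    HasRainbowMatching r 0 F H := by
  have hspan : ∀ i, ∃ S, F.SpansCopy (H i) S := fun i =>
    have hcopy : F.IsCopyIn ((H i).deleteVerts ∅) :=
      isCopyIn_deleteVerts_of_exN_lt (Finset.empty_subset _) (by
        simpa [HGraph.edges_deleteVerts, hn i] using hedges i)
    hcopy.exists_spansCopy.imp fun _ => And.left
  choose S hS using hspan
  exact ⟨S, fun i => ⟨(hS i).1, (hS i).2.1⟩,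
    fun i j hij => absurd (Subsingleton.elim (α := Fin 1) i j) hij, fun i => (hS i).2.2⟩

end RainbowMatching

section Binomials

theorem mul_choose_sub_one (n q : ℕ) : n * (n - 1).choose q = (q + 1) * n.choose (q + 1) := by
  cases n with
  | zero => simp
  | succ n => rw [Nat.add_sub_cancel, Nat.add_one_mul_choose_eq, mul_comm]

theorem mul_choose_add_choose_le (a q s : ℕ) :
    s * a.choose q + a.choose (q + 1) ≤ (a + s).choose (q + 1) := by
  induction s with
  | zero => simp
  | succ s ih =>
    rw [← add_assoc, Nat.choose_succ_succ' (a + s) q, add_one_mul]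
    linarith [Nat.choose_le_choose q (Nat.le_add_right a s)]

theorem choose_le_choose_sub_add (n q j : ℕ) :
    n.choose (q + 1) ≤ (n - j).choose (q + 1) + j * (n - 1).choose q := by
  induction j with
  | zero => simp
  | succ j ih =>
    rcases le_or_gt n j with hj | hj
    · rw [Nat.sub_eq_zero_of_le hj] at ih
      rw [Nat.sub_eq_zero_of_le (by omega)]
      linarith [Nat.mul_le_mul_right ((n - 1).choose q) (Nat.le_succ j)]
    · have hpascal := Nat.choose_succ_succ' (n - (j + 1)) q
      rw [show n - (j + 1) + 1 = n - j by omega] at hpascal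
      rw [add_one_mul]
      linarith [Nat.choose_le_choose q (show n - (j + 1) ≤ n - 1 by omega)]

theorem one_sub_mul_choose_le {n j q : ℕ} {a : ℝ} (hj : j ≤ n) (hn : 0 < n)
    (ha : (q : ℝ) * (n - j) ≤ a * n) : (1 - a) * (n.choose q : ℝ) ≤ (j.choose q : ℝ) := by
  have hn' : (0 : ℝ) < n := by exact_mod_cast hn
  cases q with
  | zero =>
    have : 0 ≤ a := nonneg_of_mul_nonneg_left (by simpa using ha) hn'
    simpa using this
  | succ q =>
    have hdiff : (n.choose (q + 1) : ℝ) ≤ j.choose (q + 1) + (n - j) * (n - 1).choose q := by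
      have := choose_le_choose_sub_add n q (n - j)
      rw [Nat.sub_sub_self hj] at this
      rw [← Nat.cast_sub hj]
      exact_mod_cast this
    have habsorb : (n : ℝ) * (n - 1).choose q = (q + 1) * n.choose (q + 1) := by
      exact_mod_cast mul_choose_sub_one n q
    have : (n - j) * ((n - 1).choose q : ℝ) ≤ a * n.choose (q + 1) := by
      refine le_of_mul_le_mul_left ?_ hn'
      calc (n : ℝ) * ((n - j) * (n - 1).choose q)
          = ((q + 1 : ℕ) * (n - j)) * n.choose (q + 1) := by
            push_cast; linear_combination (n - j : ℝ) * habsorb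
        _ ≤ (a * n) * n.choose (q + 1) := by gcongr
        _ = n * (a * n.choose (q + 1)) := by ring
    linarith

end Binomials

section TuranDensity

variable {r : ℕ} {F : HGraph r}

theorem natCast_mul_choose {k : ℕ} (hr : 0 < r) :
    (k : ℝ) * ((k - 1).choose (r - 1) : ℝ) = r * (k.choose r : ℝ) := by
  have := mul_choose_sub_one k (r - 1)
  rw [Nat.sub_add_cancel hr] at this
  exact_mod_cast this

theorem mul_choose_le_mul_choose_sub_one {j n : ℕ} (hr : 0 < r) (hj : j ≤ n) :
    r * (j.choose r : ℝ) ≤ n * (n.choose (r - 1) : ℝ) := by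
  have hshrink : ((j - 1).choose (r - 1) : ℝ) ≤ n.choose (r - 1) := by
    exact_mod_cast Nat.choose_le_choose _ (by omega)
  rw [← natCast_mul_choose hr]
  gcongr

theorem HasTuranDensity.nonneg {π : ℝ} (hπ : HasTuranDensity r F π) : 0 ≤ π :=
  ge_of_tendsto' hπ fun _ => by positivity

theorem HasTuranDensity.eventually_abs_sub_le {π η : ℝ} (hπ : HasTuranDensity r F π)
    (hη : 0 < η) :
    ∀ᶠ k : ℕ in atTop, |(exN r k F : ℝ) - π * (k.choose r : ℝ)| ≤ η * (k.choose r : ℝ) := by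
  filter_upwards [hπ.eventually (Metric.closedBall_mem_nhds π hη), eventually_ge_atTop r]
    with k hk hkr
  have hpos : (0 : ℝ) < k.choose r := by exact_mod_cast Nat.choose_pos hkr
  rwa [Real.dist_eq, div_sub' hpos.ne', abs_div, abs_of_pos hpos,
    div_le_iff₀ hpos, mul_comm (k.choose r : ℝ)] at hk

theorem HasTuranDensity.eventually_abs_dN_sub_le {π η : ℝ} (hπ : HasTuranDensity r F π)
    (hr : 0 < r) (hη : 0 < η) :
    ∀ᶠ k : ℕ in atTop, |dN r k F - π * ((k - 1).choose (r - 1) : ℝ)| ≤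
      η * ((k - 1).choose (r - 1) : ℝ) := by
  filter_upwards [hπ.eventually_abs_sub_le hη, eventually_gt_atTop 0] with k hk hk0
  have hk0 : (0 : ℝ) < k := by exact_mod_cast hk0
  refine le_of_mul_le_mul_left ?_ hk0
  calc (k : ℝ) * |dN r k F - π * ((k - 1).choose (r - 1) : ℝ)|
      = |r * ((exN r k F : ℝ) - π * (k.choose r : ℝ))| := by
        rw [← Nat.abs_cast, ← abs_mul, mul_sub, dN, mul_div_cancel₀ _ hk0.ne']
        congr 1
        linear_combination -π * natCast_mul_choose (k := k) hr
    _ ≤ r * (η * (k.choose r : ℝ)) := by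
        rw [abs_mul, Nat.abs_cast]
        gcongr
    _ = k * (η * ((k - 1).choose (r - 1) : ℝ)) := by
        linear_combination -η * natCast_mul_choose (k := k) hr

theorem HasTuranDensity.eventually_exN_le_add {π η : ℝ} (hπ : HasTuranDensity r F π)
    (hη : 0 < η) :
    ∀ᶠ j : ℕ in atTop, ∀ l ≥ j, (exN r j F : ℝ) ≤ exN r l F + η * (l.choose r : ℝ) := by
  filter_upwards [eventually_forall_ge_atTop.mpr (hπ.eventually_abs_sub_le (half_pos hη))]
    with j hj l hl
  have hmono : (j.choose r : ℝ) ≤ l.choose r := by exact_mod_cast Nat.choose_le_choose r hl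
  linarith [(abs_le.mp (hj j le_rfl)).2, (abs_le.mp (hj l hl)).1,
    mul_le_mul_of_nonneg_left hmono hπ.nonneg, mul_le_mul_of_nonneg_left hmono (half_pos hη).le]

theorem mul_le_exN_sub_exN {a N : ℕ} (haN : a ≤ N) {x : ℝ}
    (hx : ∀ j, a ≤ j → j < N → x ≤ deltaN r (j + 1) F) :
    (N - a : ℝ) * x ≤ (exN r N F : ℝ) - exN r a F := by
  induction N, haN using Nat.le_induction with
  | base => simp
  | succ N haN ih =>
    have hstep := hx N haN (Nat.lt_succ_self N)
    have := ih fun j hj hjN => hx j hj (hjN.trans (Nat.lt_succ_self N))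
    rw [deltaN, Nat.add_sub_cancel] at hstep
    push_cast
    linarith

theorem exN_add_mul_add_choose_le (hr : 0 < r) {N m s : ℕ} (hm : 0 < m) (hms : m * s ≤ N + s)
    {x D : ℝ} (hx : ∀ j, N + s - m * s ≤ j → j < N → x ≤ deltaN r (j + 1) F)
    (hD : m * D ≤ (N.choose (r - 1) : ℝ) + (m - 1) * x) :
    exN r (N + s - m * s) F + (m * s : ℕ) * D + (N.choose r : ℝ) ≤
      ((N + s).choose r : ℝ) + exN r N F := by
  have hle : N + s - m * s ≤ N := by
    have := Nat.le_mul_of_pos_left s hm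
    omega
  have htele := mul_le_exN_sub_exN hle hx
  have hchoose := mul_choose_add_choose_le N (r - 1) s
  rw [Nat.sub_add_cancel hr] at hchoose
  have hchoose : (s : ℝ) * (N.choose (r - 1) : ℝ) + (N.choose r : ℝ) ≤ (N + s).choose r := by
    exact_mod_cast hchoose
  rw [Nat.cast_sub hms] at htele
  push_cast at htele ⊢
  linarith [mul_le_mul_of_nonneg_left hD (Nat.cast_nonneg (α := ℝ) s)]

end TuranDensity

section Asymptotics

variable {r : ℕ} {F : HGraph r} {π δ : ℝ}

theorem eventually_forall_of_mul_sub_le {P : ℕ → Prop} (hP : ∀ᶠ k in atTop, P k) (hr : 0 < r)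
    (hδ : δ < 1) : ∀ᶠ n : ℕ in atTop, ∀ j ≤ n, (r : ℝ) * (n - j) ≤ δ * n → P j := by
  obtain ⟨N, hN⟩ := eventually_atTop.mp hP
  have htend : Tendsto (fun n : ℕ => (1 - δ) * n) atTop atTop :=
    tendsto_natCast_atTop_atTop.const_mul_atTop (sub_pos.mpr hδ)
  filter_upwards [htend.eventually_ge_atTop N] with n hn j hj hwin
  have hr1 : (1 : ℝ) ≤ r := by exact_mod_cast hr
  have hjn : (0 : ℝ) ≤ n - j := sub_nonneg.mpr (by exact_mod_cast hj)
  refine hN j ?_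
  have : (N : ℝ) ≤ j := by linarith [le_mul_of_one_le_left hjn hr1]
  exact_mod_cast this

theorem HasTuranDensity.eventually_dN_mem_Icc (hπ : HasTuranDensity r F π) (hr : 0 < r)
    (hπ1 : π ≤ 1) (hδ : 0 < δ) (hδ1 : δ < 1) :
    ∀ᶠ n : ℕ in atTop, ∀ j ≤ n, (r : ℝ) * (n - j) ≤ δ * n →
      dN r j F ∈ Set.Icc ((π - 3 * δ) * (n.choose (r - 1) : ℝ))
        ((π + δ) * (n.choose (r - 1) : ℝ)) := by
  have hlarge : ∀ᶠ n : ℕ in atTop, (r : ℝ) ≤ δ * n :=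
    (tendsto_natCast_atTop_atTop.const_mul_atTop hδ).eventually_ge_atTop _
  filter_upwards [eventually_forall_of_mul_sub_le ((hπ.eventually_abs_dN_sub_le hr hδ).and
    (eventually_gt_atTop 0)) hr hδ1, hlarge] with n hn hrn j hj hwin
  obtain ⟨hdN, hj0⟩ := hn j hj hwin
  have hupper : ((j - 1).choose (r - 1) : ℝ) ≤ n.choose (r - 1) := by
    exact_mod_cast Nat.choose_le_choose _ (by omega)
  have hlower : (1 - 2 * δ) * (n.choose (r - 1) : ℝ) ≤ (j - 1).choose (r - 1) := by
    refine one_sub_mul_choose_le (by omega) (by omega) ?_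
    have hjn : (j : ℝ) ≤ n := by exact_mod_cast hj
    rw [Nat.cast_pred hr, Nat.cast_pred hj0]
    linarith
  have hM : (0 : ℝ) ≤ n.choose (r - 1) := Nat.cast_nonneg _
  rw [abs_le] at hdN
  constructor
  · nlinarith [mul_le_mul_of_nonneg_left hlower hπ.nonneg, mul_le_mul_of_nonneg_left hupper hδ.le,
      mul_nonneg (mul_nonneg hδ.le hM) (sub_nonneg.mpr hπ1)]
  · linarith [mul_le_mul_of_nonneg_left hupper (add_nonneg hπ.nonneg hδ.le)]

theorem HasTuranDensity.eventually_le_deltaN {σ : ℝ} (hπ : HasTuranDensity r F π) (hr : 0 < r)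
    (hπ1 : π ≤ 1) (hδ : 0 < δ) (hδ1 : δ < 1) (hσ : 0 ≤ σ)
    (hsmooth : ∀ᶠ n : ℕ in atTop,
      dN r (n - 1) F - σ * (n.choose (r - 1) : ℝ) ≤ deltaN r n F) :
    ∀ᶠ n : ℕ in atTop, ∀ j < n, (r : ℝ) * (n - j) ≤ δ * n →
      (π - 3 * δ - σ) * (n.choose (r - 1) : ℝ) ≤ deltaN r (j + 1) F := by
  filter_upwards [hπ.eventually_dN_mem_Icc hr hπ1 hδ hδ1, eventually_forall_of_mul_sub_le
    ((tendsto_add_atTop_nat 1).eventually hsmooth) hr hδ1] with n hdN hsmooth j hj hwin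
  have hstep := hsmooth j hj.le hwin
  rw [Nat.add_sub_cancel] at hstep
  have hmono : ((j + 1).choose (r - 1) : ℝ) ≤ n.choose (r - 1) := by
    exact_mod_cast Nat.choose_le_choose _ hj
  linarith [(hdN j hj.le hwin).1, mul_le_mul_of_nonneg_left hmono hσ]

theorem HasTuranDensity.eventually_exN_add_mul_add_choose_le {σ D : ℝ} {m : ℕ}
    (hπ : HasTuranDensity r F π) (hr : 0 < r) (hm : 0 < m) (hπ1 : π ≤ 1) (hδ : 0 < δ)
    (hδ1 : δ < 1) (hσ : 0 ≤ σ)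
    (hsmooth : ∀ᶠ n : ℕ in atTop,
      dN r (n - 1) F - σ * (n.choose (r - 1) : ℝ) ≤ deltaN r n F)
    (hD : m * D ≤ 1 - δ + (m - 1) * (π - 3 * δ - σ)) :
    ∀ᶠ n : ℕ in atTop, ∀ t : ℕ, m * t ≤ n → (r : ℝ) * (m * t) ≤ δ * n → ∀ s ≤ t,
      exN r (n - t + s - m * s) F + (m * s : ℕ) * (D * (n.choose (r - 1) : ℝ)) +
        ((n - t).choose r : ℝ) ≤ ((n - t + s).choose r : ℝ) + exN r (n - t) F := by
  filter_upwards [hπ.eventually_le_deltaN hr hπ1 hδ hδ1 hσ hsmooth, eventually_gt_atTop 0]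
    with n hdelta hn t htn hwin s hst
  have htm : t ≤ m * t := Nat.le_mul_of_pos_left t hm
  have hsm : m * s + (t - s) ≤ m * t := by
    obtain ⟨m, rfl⟩ := Nat.exists_eq_add_of_le' hm
    have := Nat.mul_le_mul_left m hst
    linarith [Nat.sub_add_cancel hst, add_one_mul m s, add_one_mul m t]
  refine exN_add_mul_add_choose_le hr hm (by omega) (fun j hj hjn => hdelta j (by omega) ?_) ?_
  · have hjt : (n : ℝ) - j ≤ m * t := by
      rw [sub_le_iff_le_add]
      exact_mod_cast (by omega : n ≤ m * t + j)
    exact (mul_le_mul_of_nonneg_left hjt (Nat.cast_nonneg r)).trans hwin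
  · have hchoose : (1 - δ) * (n.choose (r - 1) : ℝ) ≤ (n - t).choose (r - 1) := by
      refine one_sub_mul_choose_le (Nat.sub_le n t) hn (le_trans ?_ hwin)
      rw [Nat.cast_sub (htm.trans htn), sub_sub_cancel, Nat.cast_pred hr]
      have : (t : ℝ) ≤ m * t := by exact_mod_cast htm
      gcongr
      linarith
    linarith [mul_le_mul_of_nonneg_right hD (Nat.cast_nonneg (α := ℝ) (n.choose (r - 1)))]

theorem HasTuranDensity.eventually_dN_add_le {σ : ℝ} (hπ : HasTuranDensity r F π) (hr : 2 ≤ r)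
    (hπ1 : π ≤ 1) (hδ : 0 < δ) (hδ1 : δ < 1) (hσ : 0 ≤ σ) :
    ∀ᶠ n : ℕ in atTop, ∀ k ≤ n, (r : ℝ) * k ≤ δ * n →
      dN r (n - k) F + σ * ((n - k).choose (r - 1) : ℝ) + k * ((n - 2).choose (r - 2) : ℝ) ≤
        (π + σ + 2 * δ) * (n.choose (r - 1) : ℝ) := by
  filter_upwards [hπ.eventually_dN_mem_Icc (by omega) hπ1 hδ hδ1, eventually_gt_atTop 0]
    with n hdN hn k hkn hk
  have hn : (0 : ℝ) < n := by exact_mod_cast hn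
  have hdN := (hdN (n - k) (Nat.sub_le n k) (by rwa [Nat.cast_sub hkn, sub_sub_cancel])).2
  have hchoose : ((n - k).choose (r - 1) : ℝ) ≤ n.choose (r - 1) := by
    exact_mod_cast Nat.choose_le_choose _ (Nat.sub_le n k)
  have hcodeg : k * ((n - 2).choose (r - 2) : ℝ) ≤ δ * n.choose (r - 1) := by
    have hmono : ((n - 2).choose (r - 2) : ℝ) ≤ (n - 1).choose (r - 2) := by
      exact_mod_cast Nat.choose_le_choose _ (by omega)
    have habsorb := natCast_mul_choose (k := n) (r := r - 1) (by omega)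
    rw [Nat.cast_pred (by omega : 0 < r), Nat.sub_sub] at habsorb
    have hM : (0 : ℝ) ≤ n.choose (r - 1) := Nat.cast_nonneg _
    refine le_of_mul_le_mul_left ?_ hn
    calc (n : ℝ) * (k * ((n - 2).choose (r - 2) : ℝ))
        ≤ n * (k * ((n - 1).choose (r - 2) : ℝ)) := by gcongr
      _ = ((r - 1) * k) * (n.choose (r - 1) : ℝ) := by linear_combination (k : ℝ) * habsorb
      _ ≤ (δ * n) * (n.choose (r - 1) : ℝ) :=
          mul_le_mul_of_nonneg_right (by linarith [(Nat.cast_nonneg k : (0 : ℝ) ≤ k)]) hM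
      _ = n * (δ * n.choose (r - 1)) := by ring
  linarith [mul_le_mul_of_nonneg_left hchoose hσ]

theorem HasTuranDensity.eventually_mul_exN_sub_le {c : ℝ} (hπ : HasTuranDensity r F π)
    (hr : 0 < r) (hδ1 : δ ≤ 1 / 16) (hc : 0 < c) :
    ∀ᶠ n : ℕ in atTop, ∀ k t : ℕ, t ≤ k → k ≤ n → (r : ℝ) * k ≤ δ * n →
      (r : ℝ) * k ≤ c / 2 * n →
      r * ((exN r (n - k) F : ℝ) + k * ((n - 1).choose (r - 1) : ℝ) - exN r (n - t) F) ≤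
        c * ((n - k).choose (r - 1) : ℝ) * (n - k : ℕ) := by
  filter_upwards [eventually_forall_of_mul_sub_le
    (hπ.eventually_exN_le_add (by positivity : 0 < c / 8)) hr (by linarith : δ < 1),
    eventually_gt_atTop 0] with n hex hn k t htk hkn hkδ hkc
  have hn' : (0 : ℝ) < n := by exact_mod_cast hn
  have hnk : (n : ℝ) - (n - k : ℕ) = k := by rw [Nat.cast_sub hkn, sub_sub_cancel]
  have hex := hex (n - k) (Nat.sub_le n k) (by rwa [hnk]) (n - t) (by omega)
  have hshrink : ((n - 1).choose (r - 1) : ℝ) ≤ n.choose (r - 1) := by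
    exact_mod_cast Nat.choose_le_choose _ (Nat.sub_le n 1)
  have hchoose_t := mul_choose_le_mul_choose_sub_one hr (Nat.sub_le n t)
  have hchoose_k : (1 - δ) * n.choose (r - 1) ≤ (n - k).choose (r - 1) := by
    refine one_sub_mul_choose_le (Nat.sub_le n k) hn (le_trans ?_ hkδ)
    rw [hnk, Nat.cast_pred hr]
    gcongr
    linarith
  have hkn_le : (1 - δ) * n ≤ (n - k : ℕ) := by
    have : (k : ℝ) ≤ r * k := le_mul_of_one_le_left (Nat.cast_nonneg k) (by exact_mod_cast hr)
    linarith
  calc _ ≤ r * (c / 8 * ((n - t).choose r : ℝ) + k * n.choose (r - 1)) := by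
        gcongr
        linarith [mul_le_mul_of_nonneg_left hshrink (Nat.cast_nonneg (α := ℝ) k)]
    _ = c / 8 * (r * ((n - t).choose r : ℝ)) + r * k * n.choose (r - 1) := by ring
    _ ≤ c / 8 * (n * n.choose (r - 1)) + c / 2 * n * n.choose (r - 1) := by gcongr
    _ ≤ c * ((1 - δ) * n.choose (r - 1)) * ((1 - δ) * n) := by
        have : (5 / 8 : ℝ) ≤ (1 - δ) * (1 - δ) := by nlinarith
        nlinarith [mul_le_mul_of_nonneg_left this
          (by positivity : 0 ≤ c * n * (n.choose (r - 1) : ℝ))]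
    _ ≤ _ := by
        have : 0 ≤ (1 - δ) * n := mul_nonneg (by linarith) hn'.le
        gcongr

end Asymptotics

section EventualMatching

variable {r : ℕ} {F : HGraph r} {π δ c : ℝ}

theorem HasTuranDensity.eventually_hasRainbowMatching {m : ℕ} (hπ : HasTuranDensity r F π)
    (hr : 2 ≤ r) (hm : 0 < m) (hFm : F.verts.card = m) (hδ : 0 < δ) (hδπ : 17 * m * δ ≤ 1 - π)
    (hc : 0 < c)
    (hbdd : ∀ᶠ n : ℕ in atTop,
      BoundedAt r n F (c * (n.choose (r - 1) : ℝ)) (8 * δ * (n.choose (r - 1) : ℝ)))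
    (hsmooth : ∀ᶠ n : ℕ in atTop,
      dN r (n - 1) F - 4 * δ * (n.choose (r - 1) : ℝ) ≤ deltaN r n F) :
    ∀ᶠ n : ℕ in atTop, ∀ t : ℕ, (r : ℝ) * ((m + 1) * t : ℕ) ≤ δ * n →
      (r : ℝ) * ((m + 1) * t : ℕ) ≤ c / 2 * n →
      ∀ (H : Fin (t + 1) → HGraph r) (V : Finset ℕ), (∀ i, (H i).verts = V) → V.card = n →
        (∀ i, n.choose r - (n - t).choose r + exN r (n - t) F < (H i).edges.card) →
        HasRainbowMatching r t F H := by
  have hr0 : 0 < r := by omega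
  have hm1 : (1 : ℝ) ≤ m := by exact_mod_cast hm
  have hmδ : δ ≤ m * δ := le_mul_of_one_le_left hδ.le hm1
  have hδ1 : δ ≤ 1 / 16 := by linarith [hπ.nonneg]
  have hπ1 : π ≤ 1 := by linarith
  have hD : m * (π + 8 * δ + 2 * δ) ≤ 1 - δ + (m - 1) * (π - 3 * δ - 4 * δ) := by linarith
  filter_upwards [eventually_forall_of_mul_sub_le hbdd hr0 (by linarith : δ < 1),
    hπ.eventually_exN_add_mul_add_choose_le hr0 hm hπ1 hδ (by linarith) (by linarith) hsmooth hD,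
    hπ.eventually_dN_add_le (σ := 8 * δ) hr hπ1 hδ (by linarith) (by linarith),
    hπ.eventually_mul_exN_sub_le hr0 hδ1 hc, eventually_ge_atTop 2]
    with n hbdd hlow hdN hhigh hn t hkδ hkc H V hV hVn hedges
  have hkn : (m + 1) * t + 1 ≤ n := by
    have hr1 : (1 : ℝ) ≤ r := by exact_mod_cast hr0
    have hn2 : (2 : ℝ) ≤ n := by exact_mod_cast hn
    have := le_mul_of_one_le_left (Nat.cast_nonneg (α := ℝ) ((m + 1) * t)) hr1
    have : δ * n ≤ 1 / 16 * n := by gcongr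
    exact_mod_cast (by linarith : (((m + 1) * t : ℕ) : ℝ) + 1 ≤ n)
  have hmt : m * t + t = (m + 1) * t := (add_one_mul m t).symm
  refine hasRainbowMatching_of_boundedAt hV hVn hFm rfl hkn hedges
    (hbdd (n - (m + 1) * t) (Nat.sub_le _ _) ?_) (hdN _ (by omega) hkδ)
    (hlow t (by omega) (le_trans ?_ hkδ)) (hhigh _ t (by omega) (by omega) hkδ hkc)
  · rwa [Nat.cast_sub (by omega), sub_sub_cancel]
  · exact_mod_cast Nat.mul_le_mul_left r (by omega : m * t ≤ (m + 1) * t)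

theorem mul_add_one_mul_le_of_le_div {m t : ℕ} {a x : ℝ} (hr : 0 < r) (hm : 0 < m)
    (h : (t : ℝ) ≤ a * x / (4 * r * m)) : (r : ℝ) * ((m + 1) * t : ℕ) ≤ a / 2 * x := by
  have hm1 : (1 : ℝ) ≤ m := by exact_mod_cast hm
  rw [le_div_iff₀ (by positivity)] at h
  push_cast
  nlinarith [mul_nonneg (mul_nonneg (Nat.cast_nonneg (α := ℝ) r) (Nat.cast_nonneg (α := ℝ) t))
    (sub_nonneg.mpr hm1)]

end EventualMatching

theorem statement_1_general (m r : ℕ) (hr : 2 ≤ r) (hm : 0 < m)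
    (F : HGraph r) (hFm : F.verts.card = m)
    (π : ℝ) (hπ : HasTuranDensity r F π) (c : ℝ) (hc : 0 < c)
    (hcond : ∀ᶠ n : ℕ in atTop,
      BoundedAt r n F (c * (n.choose (r - 1) : ℝ))
        ((1 - π) / (4 * m) * (n.choose (r - 1) : ℝ)) ∧
      dN r (n - 1) F - (1 - π) / (8 * m) * (n.choose (r - 1) : ℝ) ≤ deltaN r n F) :
    ∃ N₀ : ℕ, ∀ n : ℕ, N₀ ≤ n → ∀ t : ℕ,
      (t : ℝ) ≤ min (c * n / (4 * r * m)) ((1 - π) * n / (64 * r * m ^ 2)) →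
      ∀ H : Fin (t + 1) → HGraph r,
        (∀ i j, (H i).verts = (H j).verts) →
        (∀ i, (H i).verts.card = n) →
        (∀ i, n.choose r - (n - t).choose r + exN r (n - t) F < (H i).edges.card) →
        HasRainbowMatching r t F H := by
  have hr0 : 0 < r := by omega
  have hm0 : (0 : ℝ) < m := by exact_mod_cast hm
  rcases le_or_gt 1 π with hπ1 | hπ1
  · refine ⟨0, fun n _ t ht H _ hn hedges => ?_⟩
    have ht0 : (t : ℝ) ≤ 0 := (ht.trans (min_le_right _ _)).trans
      (div_nonpos_of_nonpos_of_nonneg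
        (mul_nonpos_of_nonpos_of_nonneg (sub_nonpos.mpr hπ1) n.cast_nonneg) (by positivity))
    obtain rfl : t = 0 := by exact_mod_cast ht0.antisymm t.cast_nonneg
    exact hasRainbowMatching_zero hn fun i => by simpa using hedges i
  · have hπ0 : 0 < 1 - π := sub_pos.mpr hπ1
    have hδ : 17 * m * ((1 - π) / (32 * m)) ≤ 1 - π := by
      rw [mul_div_assoc', div_le_iff₀ (by positivity)]
      nlinarith [mul_pos hm0 hπ0]
    obtain ⟨N₀, hN₀⟩ := eventually_atTop.mp <|
      hπ.eventually_hasRainbowMatching hr hm hFm (by positivity) hδ hc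
        (hcond.mono fun n h => by convert h.1 using 2; ring)
        (hcond.mono fun n h => by convert h.2 using 3; ring)
    refine ⟨N₀, fun n hn t ht H hV hcard hedges => hN₀ n hn t ?_ ?_ H (H 0).verts
      (fun i => hV i 0) (hcard 0) hedges⟩
    · have := mul_add_one_mul_le_of_le_div (a := 2 * ((1 - π) / (32 * m))) (x := n) hr0 hm <| by
        refine (ht.trans (min_le_right _ _)).trans_eq ?_
        field_simp
        ring
      rwa [mul_div_cancel_left₀ _ two_ne_zero] at this
    · exact mul_add_one_mul_le_of_le_div hr0 hm (ht.trans (min_le_left _ _))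

/-- the rainbow version of the main theorem. -/
theorem statement_1 (m r : ℕ) (hr : 2 ≤ r) (hrm : r ≤ m)
    (F : HGraph r) (hFm : F.verts.card = m)
    (π : ℝ) (hπ : HasTuranDensity r F π) (hπ0 : 0 < π)
    (c : ℝ) (hc : 0 < c)
    (hcond : ∀ᶠ n : ℕ in atTop,
      BoundedAt r n F (c * (n.choose (r-1) : ℝ))
        ((1 - π) / (4 * m) * (n.choose (r-1) : ℝ)) ∧
      SmoothAt r n F ((1 - π) / (8 * m) * (n.choose (r-1) : ℝ))) :
    ∃ N₀ : ℕ, ∀ n : ℕ, N₀ ≤ n → ∀ t : ℕ,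
      (t : ℝ) ≤ min (c * n / (4 * Real.exp 1 * r * m)) ((1 - π) * n / (64 * r * m ^ 2)) →
      ∀ H : Fin (t+1) → HGraph r,
        (∀ i j, (H i).verts = (H j).verts) →
        (∀ i, (H i).verts.card = n) →
        (∀ i, n.choose r - (n - t).choose r + exN r (n - t) F < (H i).edges.card) →
        HasRainbowMatching r t F H := by
  obtain ⟨N₀, hN₀⟩ := statement_1_general m r hr (by omega) F hFm π hπ c hc
    (hcond.mono fun n h => h.imp_right fun h => by linarith [(abs_le.mp h).1])
  refine ⟨N₀, fun n hn t ht => hN₀ n hn t (ht.trans (min_le_min_right _ ?_))⟩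
  rw [mul_right_comm 4, mul_right_comm (4 * (r : ℝ)), ← div_div]
  exact div_le_self (by positivity) (Real.one_le_exp zero_le_one)

end DensityCH
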